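/- arXiv:math/0501083 — 3 statements merged into one kernel-verified Lean document; each statement's English description precedes it below -/
import Mathlib

section
/- Let B be a unital complex Banach algebra, (A,E) a B-valued Banach noncommutative probability space, and a ∈ A with E(a) invertible in B. Then there exist an open neighborhood U of 0 in B and a B-valued analytic function H_a on U with H_a(0) = E(a)^{-1} such that Ψ_a(b H_a(b)) = b for all b ∈ U; moreover H_a is unique in the sense that any two analytic functions on neighborhoods of 0 with this property agree on a neighborhood of 0. -/
open scoped Topology
open Filter

noncomputable section

variable (B A : Type*) [NormedRing B] [NormedAlgebra ℂ B] [CompleteSpace B]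
  [NormedRing A] [NormedAlgebra ℂ A] [CompleteSpace A]

/-- A `B`-valued Banach noncommutative probability space structure on `A`. -/
structure NCPS where
  ι : B →ₐ[ℂ] A
  isometry : Isometry ι
  E : A →L[ℂ] B
  E_ι : ∀ b : B, E (ι b) = b
  cond_exp : ∀ (a : A) (b₁ b₂ : B), E (ι b₁ * a * ι b₂) = b₁ * E a * b₂

variable {B A}

/-- `Ψ_a(b) = E((1 - ba)⁻¹) - 1`. -/
def Psi (P : NCPS B A) (a : A) (b : B) : B := P.E (Ring.inverse (1 - P.ι b * a)) - 1

/-- The reduced function `E(a (1 - ba)⁻¹)`. -/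
def GG (P : NCPS B A) (a : A) (b : B) : B := P.E (a * Ring.inverse (1 - P.ι b * a))

theorem E_left (P : NCPS B A) (b : B) (x : A) : P.E (P.ι b * x) = b * P.E x := by
  have := P.cond_exp x b 1
  simpa using this

theorem GG_zero (P : NCPS B A) (a : A) : GG P a 0 = P.E a := by simp [GG]

/-- The embedding as a continuous linear map. -/
def iotaL (P : NCPS B A) : B →L[ℂ] A := ⟨P.ι.toLinearMap, P.isometry.continuous⟩

theorem GG_analytic (P : NCPS B A) (a : A) : AnalyticAt ℂ (GG P a) 0 := by
  have h1 : AnalyticAt ℂ (fun b : B => iotaL P b * a) 0 :=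
    ((iotaL P).analyticAt 0).mul analyticAt_const
  have h0 : (fun b : B => iotaL P b * a) 0 = 0 := by simp
  have h2 : AnalyticAt ℂ (fun b : B => Ring.inverse (1 - iotaL P b * a)) 0 := by
    refine AnalyticAt.fun_comp (g := fun x : A => Ring.inverse (1 - x)) ?_ h1
    have h0' : iotaL P 0 * a = 0 := h0
    rw [h0']
    exact analyticAt_inverse_one_sub ℂ A
  exact (P.E.analyticAt _).fun_comp (analyticAt_const.mul h2)

theorem Psi_eq (P : NCPS B A) (a : A) : ∀ᶠ b in 𝓝 (0 : B), Psi P a b = b * GG P a b := by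
  have hc : Continuous (fun b : B => 1 - P.ι b * a) :=
    continuous_const.sub (P.isometry.continuous.mul continuous_const)
  have : ∀ᶠ b in 𝓝 (0 : B), IsUnit (1 - P.ι b * a) := by
    have hm : {x : A | IsUnit x} ∈ 𝓝 ((fun b : B => 1 - P.ι b * a) 0) :=
      Units.isOpen.mem_nhds (by simp)
    exact hc.continuousAt hm
  filter_upwards [this] with b hb
  have h1 : P.E 1 = 1 := by simpa using P.E_ι 1
  unfold Psi GG
  rw [← E_left, ← mul_assoc]
  have h2 : P.ι b * a * Ring.inverse (1 - P.ι b * a) = Ring.inverse (1 - P.ι b * a) - 1 := by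
    have := Ring.mul_inverse_cancel _ hb
    rw [sub_mul, one_mul] at this
    exact (sub_eq_iff_eq_add'.2 (sub_eq_iff_eq_add.1 this)).symm
  rw [h2, map_sub, h1]

/-- Right multiplication by a unit. -/
def mulE (u : Bˣ) : B ≃L[ℂ] B :=
  ContinuousLinearEquiv.equivOfInverse ((ContinuousLinearMap.mul ℂ B).flip u)
    ((ContinuousLinearMap.mul ℂ B).flip (↑u⁻¹ : B)) (fun x => by simp) (fun x => by simp)

theorem exists_part (P : NCPS B A) (a : A) (u : Bˣ) (hu : (u : B) = P.E a) :
    ∃ H : B → B, AnalyticAt ℂ H 0 ∧ H 0 = (↑u⁻¹ : B) ∧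
      ∀ᶠ b in 𝓝 (0 : B), Psi P a (b * H b) = b := by
  let F : B × B → B := fun p => p.2 * GG P a (p.1 * p.2)
  have hF : AnalyticAt ℂ F ((0 : B), (↑u⁻¹ : B)) := by
    refine analyticAt_snd.mul (AnalyticAt.fun_comp (g := GG P a) ?_ (analyticAt_fst.mul analyticAt_snd))
    simpa using GG_analytic P a
  have cdf : ContDiffAt ℂ ⊤ F ((0 : B), (↑u⁻¹ : B)) := hF.contDiffAt
  have hd : fderiv ℂ F ((0 : B), (↑u⁻¹ : B)) ∘L .inr ℂ B B = (mulE u : B →L[ℂ] B) := by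
    have h1 : HasFDerivAt (fun h : B => F (0, h))
        (fderiv ℂ F ((0 : B), (↑u⁻¹ : B)) ∘L .inr ℂ B B) (↑u⁻¹ : B) :=
      HasFDerivAt.comp (↑u⁻¹ : B) (g := F) (f := fun h : B => ((0 : B), h))
        hF.differentiableAt.hasFDerivAt (hasFDerivAt_prodMk_right _ _)
    have h2 : (fun h : B => F (0, h)) = (mulE u : B →L[ℂ] B) := by
      ext h
      simp [F, GG_zero, mulE, hu]
    rw [h2] at h1
    exact h1.unique (ContinuousLinearMap.hasFDerivAt _)
  have if2 : (fderiv ℂ F ((0 : B), (↑u⁻¹ : B)) ∘L .inr ℂ B B).IsInvertible := by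
    rw [hd]; exact ⟨_, rfl⟩
  have pn : (⊤ : WithTop ℕ∞) ≠ 0 := by simp
  let H := cdf.implicitFunction pn if2
  have hH0 : H 0 = (↑u⁻¹ : B) := cdf.implicitFunction_apply_self pn if2
  have hHa : AnalyticAt ℂ H 0 := (cdf.contDiffAt_implicitFunction pn if2).analyticAt
  refine ⟨H, hHa, hH0, ?_⟩
  have h3 : ∀ᶠ b in 𝓝 (0 : B), F (b, H b) = F ((0 : B), (↑u⁻¹ : B)) :=
    cdf.eventually_apply_implicitFunction pn if2
  have ht : Tendsto (fun b => b * H b) (𝓝 0) (𝓝 0) := by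
    have := (continuousAt_id.fun_mul hHa.continuousAt).tendsto
    simpa using this
  filter_upwards [h3, ht.eventually (Psi_eq P a)] with b h3 h4
  have h5 : F ((0 : B), (↑u⁻¹ : B)) = 1 := by simp [F, GG_zero, ← hu]
  rw [h4, mul_assoc]
  rw [h5] at h3
  change H b * GG P a (b * H b) = 1 at h3
  rw [h3, mul_one]

theorem Psi_strict (P : NCPS B A) (a : A) (u : Bˣ) (hu : (u : B) = P.E a) :
    HasStrictFDerivAt (Psi P a) (mulE u : B →L[ℂ] B) 0 := by
  have hA : AnalyticAt ℂ (fun b => b * GG P a b) 0 := analyticAt_id.mul (GG_analytic P a)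
  have hA' : AnalyticAt ℂ (Psi P a) 0 :=
    hA.congr ((Psi_eq P a).mono fun b hb => hb.symm)
  have h1 : HasFDerivAt (fun b => b * GG P a b) (mulE u : B →L[ℂ] B) 0 := by
    have := (hasFDerivAt_id (𝕜 := ℂ) (0 : B)).mul' (GG_analytic P a).differentiableAt.hasFDerivAt
    refine this.congr_fderiv ?_
    ext h
    simp [mulE, GG_zero, hu]
  have h2 : HasFDerivAt (Psi P a) (mulE u : B →L[ℂ] B) 0 := h1.congr_of_eventuallyEq (Psi_eq P a)
  have h3 := hA'.hasStrictFDerivAt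
  rwa [h2.fderiv] at h3

theorem zero_of_mul (K : B → B) (hK : AnalyticAt ℂ K 0)
    (h : ∀ᶠ b in 𝓝 (0 : B), b * K b = 0) : K =ᶠ[𝓝 (0 : B)] 0 := by
  obtain ⟨r, hr, hb⟩ := Metric.eventually_nhds_iff_ball.1 (hK.eventually_analyticAt.and h)
  set c : ℝ := ‖(1 : B)‖ + 1 with hc
  have hc1 : 1 ≤ c := by simp [hc]
  have hc0 : 0 < c := by linarith
  have hs : 0 < r / c := by positivity
  have hsr : r / c ≤ r := div_le_self hr.le hc1
  have hsc : r / c * c = r := by field_simp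
  set s := r / c with hsdef
  refine Metric.eventually_nhds_iff_ball.2 ⟨s / 4, by positivity, fun b hbb => ?_⟩
  rw [mem_ball_zero_iff] at hbb
  have hin : ∀ z : ℂ, ‖z‖ < s / 2 → b + z • (1 : B) ∈ Metric.ball (0 : B) r := by
    intro z hz
    rw [mem_ball_zero_iff]
    have h1 := norm_add_le b (z • (1 : B))
    rw [norm_smul] at h1
    have h2 : ‖z‖ * ‖(1 : B)‖ ≤ s / 2 * c :=
      mul_le_mul hz.le (by simp [hc]) (norm_nonneg _) (by positivity)
    nlinarith
  let f : ℂ → B := fun z => K (b + z • (1 : B))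
  have hf : AnalyticOnNhd ℂ f (Metric.ball 0 (s / 2)) := by
    intro z hz
    rw [mem_ball_zero_iff] at hz
    exact AnalyticAt.fun_comp (g := K) (hb _ (hin z hz)).1
      (analyticAt_const.add (analyticAt_id.smul analyticAt_const))
  have hz0 : ((3 * s / 8 : ℝ) : ℂ) ∈ Metric.ball (0 : ℂ) (s / 2) := by
    rw [mem_ball_zero_iff, Complex.norm_real, Real.norm_of_nonneg (by positivity)]; linarith
  have hev : f =ᶠ[𝓝 ((3 * s / 8 : ℝ) : ℂ)] 0 := by
    have h1 : ∀ᶠ z in 𝓝 ((3 * s / 8 : ℝ) : ℂ), s / 4 < ‖z‖ := by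
      refine continuous_norm.continuousAt.eventually (lt_mem_nhds ?_)
      show s / 4 < ‖((3 * s / 8 : ℝ) : ℂ)‖
      rw [Complex.norm_real, Real.norm_of_nonneg (by positivity)]; linarith
    filter_upwards [h1, Metric.isOpen_ball.mem_nhds hz0] with z hz hz2
    rw [mem_ball_zero_iff] at hz2
    have hzn : 0 < ‖z‖ := by linarith
    have hz' : z ≠ 0 := norm_pos_iff.1 hzn
    have hlt : ‖-(z⁻¹ • b)‖ < 1 := by
      rw [norm_neg, norm_smul, norm_inv, inv_mul_lt_iff₀ hzn]; linarith
    have hun : IsUnit (1 - -(z⁻¹ • b)) := isUnit_one_sub_of_norm_lt_one hlt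
    have he : b + z • (1 : B) = z • (1 - -(z⁻¹ • b)) := by
      rw [sub_neg_eq_add, smul_add, smul_inv_smul₀ hz', add_comm]
    have h0 := (hb _ (hin z hz2)).2
    have hun2 : IsUnit (b + z • (1 : B)) := by
      rw [he]
      exact hun.smul (Units.mk0 z hz')
    exact hun2.mul_right_eq_zero.1 h0
  have := hf.eqOn_zero_of_preconnected_of_eventuallyEq_zero
    (convex_ball (0 : ℂ) (s / 2)).isPreconnected hz0 hev
    (Metric.mem_ball_self (by positivity) : (0 : ℂ) ∈ Metric.ball (0 : ℂ) (s / 2))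
  simpa [f] using this

/-- Lemma 2.1 of the paper: existence and uniqueness of the analytic function `H_a` with
`Ψ_a⁽⁻¹⁾(b) = b H_a(b)`, i.e. `Ψ_a (b * H_a b) = b` near `0`, with `H_a(0) = E(a)⁻¹`. -/
theorem stmt_1 (P : NCPS B A) (a : A) (ha : IsUnit (P.E a)) :
    (∃ U ∈ 𝓝 (0 : B), ∃ H : B → B, (∀ b ∈ U, AnalyticAt ℂ H b) ∧
      H 0 = Ring.inverse (P.E a) ∧ ∀ b ∈ U, Psi P a (b * H b) = b) ∧
    ∀ H₁ H₂ : B → B, AnalyticAt ℂ H₁ 0 → AnalyticAt ℂ H₂ 0 →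
      (∀ᶠ b in 𝓝 (0 : B), Psi P a (b * H₁ b) = b) →
      (∀ᶠ b in 𝓝 (0 : B), Psi P a (b * H₂ b) = b) →
      H₁ =ᶠ[𝓝 (0 : B)] H₂ := by
  obtain ⟨u, hu⟩ := ha
  refine ⟨?_, ?_⟩
  · obtain ⟨H, h1, h2, h3⟩ := exists_part P a u hu
    refine ⟨_, h1.eventually_analyticAt.and h3, H, fun b hb => hb.1, ?_, fun b hb => hb.2⟩
    rw [h2, ← hu, Ring.inverse_unit]
  · intro H₁ H₂ hA₁ hA₂ h₁ h₂
    have hS := Psi_strict P a u hu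
    have hl := hS.eventually_left_inverse
    have key : ∀ H : B → B, AnalyticAt ℂ H 0 → (∀ᶠ b in 𝓝 (0 : B), Psi P a (b * H b) = b) →
        ∀ᶠ b in 𝓝 (0 : B), hS.localInverse (Psi P a) _ _ b = b * H b := by
      intro H hH h
      have ht : Tendsto (fun b => b * H b) (𝓝 0) (𝓝 0) := by
        have := (continuousAt_id.fun_mul hH.continuousAt).tendsto
        simpa using this
      filter_upwards [h, ht.eventually hl] with b hb hb2
      rwa [hb] at hb2
    have hz := zero_of_mul (fun b => H₁ b - H₂ b) (hA₁.sub hA₂) (by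
      filter_upwards [key H₁ hA₁ h₁, key H₂ hA₂ h₂] with b e1 e2
      rw [mul_sub, ← e1, ← e2, sub_self])
    filter_upwards [hz] with b hb
    exact sub_eq_zero.1 hb
end
end

section
/- Let B be a unital complex Banach algebra, (A,E) a B-valued Banach noncommutative probability space, and a ∈ A. Then there is a unique B-valued analytic function R_a, defined in a neighborhood of 0 in B, such that 𝒞_a^{⟨−1⟩}(b) = (1 + b R_a(b))^{-1} b = b (1 + R_a(b) b)^{-1} for all b in a neighborhood of 0; moreover R_a(0) = E(a). -/
open scoped Topology
open Filter

noncomputable section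

variable (B A : Type*) [NormedRing B] [NormedAlgebra ℂ B] [CompleteSpace B]
  [NormedRing A] [NormedAlgebra ℂ A] [CompleteSpace A]

variable {B A}

/-- `𝒞_a(b) = E((1 - ba)⁻¹ b)`. -/
def Ca (P : NCPS B A) (a : A) (b : B) : B :=
  P.E (Ring.inverse (1 - P.ι b * a) * P.ι b)

/-- `R` is (a version of) the R-transform of `a`: `R` is analytic near `0` and
`b ↦ (1 + b R(b))⁻¹ b` is a local right inverse of `𝒞_a`, i.e.
`𝒞_a⁽⁻¹⁾(b) = (1 + b R(b))⁻¹ b`. -/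
def IsRTransform (P : NCPS B A) (a : A) (R : B → B) : Prop :=
  AnalyticAt ℂ R 0 ∧
    ∀ᶠ b in 𝓝 (0 : B), Ca P a (Ring.inverse (1 + b * R b) * b) = b

theorem ev_unit {X D : Type*} [TopologicalSpace X] [NormedRing D] [CompleteSpace D]
    {f : X → D} {x : X} (hf : ContinuousAt f x) (h1 : f x = 1) :
    ∀ᶠ y in 𝓝 x, IsUnit (f y) := by
  have : {z : D | IsUnit z} ∈ 𝓝 (f x) := by
    rw [h1]
    exact Units.isOpen.mem_nhds isUnit_one
  exact hf this

theorem an_inv {X D : Type*} [NormedAddCommGroup X] [NormedSpace ℂ X]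
    [NormedRing D] [NormedAlgebra ℂ D] [CompleteSpace D]
    {f : X → D} {x : X} (hf : AnalyticAt ℂ f x) (h1 : f x = 1) :
    AnalyticAt ℂ (fun y => Ring.inverse (f y)) x := by
  have h := analyticAt_inverse (𝕜 := ℂ) (1 : Dˣ)
  rw [Units.val_one, ← h1] at h
  exact h.comp hf

theorem inv_swap {D : Type*} [Ring D] {b r : D} (h1 : IsUnit (1 + b * r))
    (h2 : IsUnit (1 + r * b)) :
    Ring.inverse (1 + b * r) * b = b * Ring.inverse (1 + r * b) := by
  rw [Ring.inverse_mul_eq_iff_eq_mul _ _ _ h1, ← mul_assoc]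
  have : (1 + b * r) * b = b * (1 + r * b) := by noncomm_ring
  rw [this, Ring.mul_inverse_cancel_right _ _ h2]

/-- `G(b) = E(a (1 - ba)⁻¹)`. -/
def Ga (P : NCPS B A) (a : A) (b : B) : B :=
  P.E (a * Ring.inverse (1 - P.ι b * a))

theorem iota_an (P : NCPS B A) (x : B) : AnalyticAt ℂ (fun b => P.ι b) x := by
  let L : B →L[ℂ] A := ⟨P.ι.toLinearMap, P.isometry.continuous⟩
  exact L.analyticAt x

theorem arg_an (P : NCPS B A) (a : A) (x : B) :
    AnalyticAt ℂ (fun b => 1 - P.ι b * a) x :=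
  analyticAt_const.sub ((iota_an P x).mul analyticAt_const)

theorem Ga_an (P : NCPS B A) (a : A) : AnalyticAt ℂ (Ga P a) 0 := by
  have h := an_inv (arg_an P a 0) (by simp)
  exact (P.E.analyticAt _).comp (analyticAt_const.mul h)

theorem Ga_zero (P : NCPS B A) (a : A) : Ga P a 0 = P.E a := by
  simp [Ga]

theorem Ca_eq (P : NCPS B A) (a : A) :
    ∀ᶠ b in 𝓝 (0 : B), Ca P a b = b + b * Ga P a b * b := by
  filter_upwards [ev_unit (arg_an P a 0).continuousAt (by simp)] with b hb
  have key : Ring.inverse (1 - P.ι b * a) * P.ι b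
      = P.ι b + P.ι b * (a * Ring.inverse (1 - P.ι b * a)) * P.ι b := by
    have h := Ring.mul_inverse_cancel _ hb
    rw [sub_mul, one_mul, sub_eq_iff_eq_add] at h
    nth_rewrite 1 [h]
    noncomm_ring
  rw [Ca, key, map_add, P.E_ι, P.cond_exp, Ga]

theorem F_an (P : NCPS B A) (a : A) :
    AnalyticAt ℂ (fun b => b + b * Ga P a b * b) 0 :=
  analyticAt_id.add ((analyticAt_id.mul (Ga_an P a)).mul analyticAt_id)

theorem F_deriv (P : NCPS B A) (a : A) :
    HasFDerivAt (fun b => b + b * Ga P a b * b)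
      ((ContinuousLinearEquiv.refl ℂ B : B ≃L[ℂ] B) : B →L[ℂ] B) 0 := by
  have hG := (Ga_an P a).differentiableAt.hasFDerivAt
  have hid := hasFDerivAt_id (𝕜 := ℂ) (0 : B)
  have h := hid.add ((hid.mul' hG).mul' hid)
  convert! h using 1
  ext v
  simp

theorem inv_exists (P : NCPS B A) (a : A) :
    ∃ w : B → B, AnalyticAt ℂ w 0 ∧ w 0 = 0 ∧
      (∀ᶠ b in 𝓝 (0 : B), w b + w b * Ga P a (w b) * w b = b) ∧
      (∀ᶠ b in 𝓝 (0 : B), w (b + b * Ga P a b * b) = b) := by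
  have hc : ContDiffAt ℂ ⊤ (fun b => b + b * Ga P a b * b) 0 := (F_an P a).contDiffAt
  have hs := hc.hasStrictFDerivAt' (F_deriv P a) (by simp)
  refine ⟨hc.localInverse (F_deriv P a) (by simp), ?_, ?_, ?_, ?_⟩
  · have := hc.to_localInverse (F_deriv P a) (by simp)
    have := this.analyticAt
    simpa using this
  · have := hc.localInverse_apply_image (F_deriv P a) (by simp)
    simpa using this
  · have := hs.eventually_right_inverse
    simp only [zero_mul, mul_zero, add_zero] at this
    exact this
  · exact hs.eventually_left_inverse

theorem uniq (R R' : B → B) (hR : AnalyticAt ℂ R 0) (hR' : AnalyticAt ℂ R' 0)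
    (h : ∀ᶠ b in 𝓝 (0 : B), b * R' b * b = b * R b * b) : R' =ᶠ[𝓝 (0 : B)] R := by
  obtain ⟨r, hr, hball⟩ := Metric.eventually_nhds_iff_ball.1
    ((hR.eventually_analyticAt.and hR'.eventually_analyticAt).and h)
  have ht : Tendsto (fun t : ℂ => t • (1 : B)) (𝓝[≠] 0) (𝓝 0) := by
    have : Continuous (fun t : ℂ => t • (1 : B)) := by fun_prop
    have := this.tendsto 0
    rw [zero_smul] at this
    exact this.mono_left nhdsWithin_le_nhds
  obtain ⟨t, ht1, ht0⟩ := ((ht.eventually (Metric.ball_mem_nhds 0 hr)).and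
    self_mem_nhdsWithin).exists
  have hu : IsUnit (t • (1 : B)) := by
    rw [← Algebra.algebraMap_eq_smul_one]
    exact (IsUnit.mk0 t ht0).map (algebraMap ℂ B)
  have heq : R' =ᶠ[𝓝 (t • (1 : B))] R := by
    filter_upwards [Metric.isOpen_ball.mem_nhds ht1, Units.isOpen.mem_nhds hu] with b hb hbu
    have h3 := (hball b hb).2
    exact hbu.mul_left_cancel (IsUnit.mul_right_cancel hbu h3)
  have := AnalyticOnNhd.eqOn_of_preconnected_of_eventuallyEq (𝕜 := ℂ)
    (fun b hb => (hball b hb).1.2) (fun b hb => (hball b hb).1.1)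
    (convex_ball (0 : B) r).isPreconnected ht1 heq
  exact this.eventuallyEq_of_mem (Metric.ball_mem_nhds 0 hr)

/-- Proposition 4.1: existence and uniqueness of the R-transform: a unique analytic `R` near `0`
with `𝒞_a⁽⁻¹⁾(b) = (1 + b R(b))⁻¹ b = b (1 + R(b) b)⁻¹`, and `R(0) = E(a)`. -/
theorem stmt_13 (P : NCPS B A) (a : A) :
    ∃ R : B → B, AnalyticAt ℂ R 0 ∧ R 0 = P.E a ∧
      (∀ᶠ b in 𝓝 (0 : B), Ca P a (Ring.inverse (1 + b * R b) * b) = b) ∧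
      (∀ᶠ b in 𝓝 (0 : B),
        Ring.inverse (1 + b * R b) * b = b * Ring.inverse (1 + R b * b)) ∧
      ∀ R' : B → B, AnalyticAt ℂ R' 0 →
        (∀ᶠ b in 𝓝 (0 : B), Ca P a (Ring.inverse (1 + b * R' b) * b) = b) →
        R' =ᶠ[𝓝 (0 : B)] R := by
  obtain ⟨w, hw, hw0, hr, hl⟩ := inv_exists P a
  have hGw : AnalyticAt ℂ (fun b => Ga P a (w b)) 0 := by
    have h := Ga_an P a
    rw [← hw0] at h
    exact h.comp hw
  have hU : AnalyticAt ℂ (fun b => 1 + Ga P a (w b) * w b) 0 :=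
    analyticAt_const.add (hGw.mul hw)
  have hU0 : 1 + Ga P a (w 0) * w 0 = 1 := by simp [hw0]
  let R : B → B := fun b => Ring.inverse (1 + Ga P a (w b) * w b) * Ga P a (w b)
  have hR : AnalyticAt ℂ R 0 := (an_inv hU hU0).mul hGw
  have left_an : ∀ S : B → B, AnalyticAt ℂ S 0 → AnalyticAt ℂ (fun b => 1 + b * S b) 0 :=
    fun S hS => analyticAt_const.add (analyticAt_id.mul hS)
  have left_u : ∀ S : B → B, AnalyticAt ℂ S 0 → ∀ᶠ b in 𝓝 (0 : B), IsUnit (1 + b * S b) :=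
    fun S hS => ev_unit (left_an S hS).continuousAt (by simp)
  have right_u : ∀ S : B → B, AnalyticAt ℂ S 0 → ∀ᶠ b in 𝓝 (0 : B), IsUnit (1 + S b * b) :=
    fun S hS => ev_unit (f := fun b => 1 + S b * b)
      (analyticAt_const.add (hS.mul analyticAt_id)).continuousAt (by simp)
  have hwt : Tendsto w (𝓝 0) (𝓝 0) := by
    have := hw.continuousAt.tendsto
    rwa [hw0] at this
  have hwR : ∀ᶠ b in 𝓝 (0 : B), Ring.inverse (1 + b * R b) * b = w b := by
    filter_upwards [left_u R hR, hr, ev_unit hU.continuousAt hU0] with b h1 h2 h3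
    rw [Ring.inverse_mul_eq_iff_eq_mul _ _ _ h1]
    have h4 : b * R b = w b * Ga P a (w b) := by
      have : b = w b * (1 + Ga P a (w b) * w b) := by
        rw [mul_add, mul_one, ← mul_assoc, h2]
      calc b * R b = w b * (1 + Ga P a (w b) * w b) * R b := by rw [← this]
        _ = w b * Ga P a (w b) := by
          rw [mul_assoc]
          simp only [R]
          rw [Ring.mul_inverse_cancel_left _ _ h3]
    rw [h4, add_mul, one_mul, h2]
  refine ⟨R, hR, ?_, ?_, ?_, ?_⟩
  · simp [R, hw0, Ga_zero]
  · filter_upwards [hwR, hr, hwt.eventually (Ca_eq P a)] with b h1 h2 h3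
    rw [h1, h3, h2]
  · filter_upwards [left_u R hR, right_u R hR] with b h1 h2
    exact inv_swap h1 h2
  · intro R' hR' hC
    apply uniq R R' hR hR'
    have hw't : Tendsto (fun b => Ring.inverse (1 + b * R' b) * b) (𝓝 0) (𝓝 0) := by
      have := ((an_inv (left_an R' hR') (by simp)).mul analyticAt_id).continuousAt.tendsto
      simp only [Pi.mul_apply, id, mul_zero] at this
      exact this
    filter_upwards [hC, hwR, hw't.eventually (Ca_eq P a), hw't.eventually hl, left_u R hR,
      right_u R hR, left_u R' hR'] with b h1 h2 h3 h4 h5 h6 h7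
    rw [← h3, h1, ← h2, inv_swap h5 h6, eq_comm,
      Ring.inverse_mul_eq_iff_eq_mul _ _ _ h7, ← mul_assoc] at h4
    have h8 : b * (1 + R b * b) = (1 + b * R' b) * b := by
      nth_rewrite 1 [h4]
      rw [Ring.inverse_mul_cancel_right _ _ h6]
    rw [mul_add, add_mul, mul_one, one_mul, ← mul_assoc] at h8
    exact (add_left_cancel h8).symm
end
end

section
/- Let B be a unital complex Banach algebra, let (A,E) and (A',E') be B-valued Banach noncommutative probability spaces, and let a ∈ A and a' ∈ A'. Fix n ≥ 0. If the moment functions satisfy μ_{a,k} = μ_{a',k} for all k = 1, …, n+1, then the nth terms of the power series expansions about 0 of the R-transforms coincide: (R_a)_n(b,…,b) = (R_{a'})_n(b,…,b) for all b ∈ B. -/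
open scoped Topology
open Filter

noncomputable section

variable (B A : Type*) [NormedRing B] [NormedAlgebra ℂ B] [CompleteSpace B]
  [NormedRing A] [NormedAlgebra ℂ A] [CompleteSpace A]

variable {B A}

/-- The `k`-th moment function `μ_{a,k}(b₁,…,b_k) = E(b₁ a b₂ a ⋯ b_k a)`. -/
def momentFn (P : NCPS B A) (a : A) (k : ℕ) (b : Fin k → B) : B :=
  P.E (List.ofFn fun j => P.ι (b j) * a).prod

open Asymptotics in
theorem ca_expand (P : NCPS B A) (a : A) (m : ℕ) :
    (fun g : B => Ca P a g - ∑ k ∈ Finset.range m, P.E ((P.ι g * a) ^ k) * g)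
      =O[𝓝 0] fun g => ‖g‖ ^ (m + 1) := by
  have hιc : Continuous P.ι := P.isometry.continuous
  have hn : ∀ g, ‖P.ι g‖ = ‖g‖ := fun g => by
    have := P.isometry.dist_eq g 0
    simpa [dist_eq_norm] using this
  have hE : ∀ (x : A) (g : B), P.E (x * P.ι g) = P.E x * g := fun x g => by
    have := P.cond_exp x 1 g
    simpa using this
  have hx : Tendsto (fun g : B => P.ι g * a) (𝓝 0) (𝓝 0) := by
    have : Continuous (fun g : B => P.ι g * a) := by fun_prop
    have h := this.tendsto 0
    simpa using h
  have h1 := hx.eventually (NormedRing.inverse_one_sub_nth_order (R := A) m)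
  have hbd : (fun g : B => Ring.inverse (1 - P.ι g * a)) =O[𝓝 0] (fun _ => (1 : ℝ)) :=
    (NormedRing.inverse_add_norm (R := A) 1).comp_tendsto (k := fun g : B => - (P.ι g * a))
      (by simpa using hx.neg) |>.congr_left (fun g => by simp [sub_eq_add_neg])
  have hι : (fun g : B => P.ι g) =O[𝓝 0] (fun g => ‖g‖) :=
    IsBigO.of_bound 1 (by simp [hn])
  have hιa : (fun g : B => P.ι g * a) =O[𝓝 0] (fun g => ‖g‖) :=
    (hι.mul (isBigO_const_const a (one_ne_zero (α := ℝ)) (𝓝 0))).congr_right (by simp)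
  have hfin : (fun g : B => P.E ((P.ι g * a) ^ m * Ring.inverse (1 - P.ι g * a) * P.ι g))
      =O[𝓝 0] fun g => ‖g‖ ^ (m + 1) := by
    refine (P.E.isBigO_comp _ _).trans ?_
    refine (((hιa.pow m).mul hbd).mul hι).congr_right ?_
    intro g; ring
  refine hfin.congr' ?_ EventuallyEq.rfl
  filter_upwards [h1] with g hg
  unfold Ca
  conv_rhs => rw [hg]
  simp only [add_mul, Finset.sum_mul, map_add, map_sum, hE]
  abel

theorem ca_strict (P : NCPS B A) (a : A) :
    HasStrictFDerivAt (Ca P a) (ContinuousLinearMap.id ℂ B) 0 := by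
  let L : B →L[ℂ] A := ⟨P.ι.toLinearMap, P.isometry.continuous⟩
  have hL : ∀ g, L g = P.ι g := fun _ => rfl
  have h1 : HasStrictFDerivAt (fun g : B => L g) L 0 := L.hasStrictFDerivAt
  have h2 : HasStrictFDerivAt (fun g : B => 1 - L g * a) _ 0 :=
    (h1.mul_const' a).const_sub 1
  have h3 : HasStrictFDerivAt (𝕜 := ℂ) (Ring.inverse : A → A)
      (-ContinuousLinearMap.mulLeftRight ℂ A (↑(1 : Aˣ)⁻¹) (↑(1 : Aˣ)⁻¹)) ((fun g : B => 1 - L g * a) 0) := by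
    have := hasStrictFDerivAt_ringInverse (𝕜 := ℂ) (1 : Aˣ)
    simpa [hL] using this
  have h4 := h3.comp (0 : B) h2
  have h5 := (P.E.hasStrictFDerivAt).comp (0 : B) (h4.mul' h1)
  refine h5.congr_fderiv ?_
  ext h
  simp [hL, P.E_ι]

theorem term_zero (p : FormalMultilinearSeries ℂ B B) (f : B → B) (hf : HasFPowerSeriesAt f p 0)
    (b : B) (n : ℕ) (h : (fun z : ℂ => f (z • b)) =O[𝓝 0] fun z => z ^ (n + 1)) :
    ∀ k ≤ n, p k (fun _ => b) = 0 := by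
  intro k
  induction k using Nat.strong_induction_on with
  | _ k ih =>
  intro hk
  have ht : Tendsto (fun z : ℂ => z • b) (𝓝 0) (𝓝 0) := by
    have : Continuous (fun z : ℂ => z • b) := by fun_prop
    simpa using this.tendsto 0
  have h1 := (hf.isBigO_sub_partialSum_pow (k + 1)).comp_tendsto ht
  have h2 : ((fun y : B => ‖y‖ ^ (k + 1)) ∘ fun z : ℂ => z • b) =O[𝓝 0] fun z => z ^ (k + 1) := by
    refine Asymptotics.IsBigO.of_bound (‖b‖ ^ (k + 1)) (Eventually.of_forall fun z => ?_)
    simp [norm_smul, mul_pow, mul_comm]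
  have h3 : (fun z : ℂ => z ^ (n + 1)) =O[𝓝 0] fun z => z ^ (k + 1) :=
    Asymptotics.IsBigO.of_bound 1 (by
      have : Tendsto (fun z : ℂ => ‖z‖) (𝓝 0) (𝓝 0) := by
        simpa using (continuous_norm (E := ℂ)).tendsto 0
      filter_upwards [this.eventually (gt_mem_nhds one_pos)] with z hz
      rw [one_mul, norm_pow, norm_pow]
      exact pow_le_pow_of_le_one (norm_nonneg _) hz.le (by omega))
  have h4 := (h.trans h3).sub (h1.trans h2)
  have h5 : (fun z : ℂ => z ^ k • p k (fun _ => b)) =O[𝓝 0] fun z => z ^ (k + 1) := by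
    refine h4.congr_left fun z => ?_
    have hs : ∀ j, p j (fun _ => z • b) = z ^ j • p j (fun _ => b) := fun j => by
      have := (p j).map_smul_univ (fun _ => z) (fun _ => b)
      simpa using this
    simp only [Function.comp, zero_add, FormalMultilinearSeries.partialSum, hs, Finset.sum_range_succ]
    rw [Finset.sum_eq_zero]
    · abel
    · intro j hj
      rw [ih j (Finset.mem_range.1 hj) (by have := Finset.mem_range.1 hj; omega), smul_zero]
  have h6 : (fun z : ℂ => p k (fun _ => b)) =O[𝓝[≠] 0] fun z : ℂ => z := by
    have h7 := (Asymptotics.isBigO_refl (fun z : ℂ => (z ^ k)⁻¹) (𝓝[≠] 0)).smul (h5.mono nhdsWithin_le_nhds)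
    refine h7.congr' ?_ ?_
    · filter_upwards [self_mem_nhdsWithin] with z hz
      rw [smul_smul, inv_mul_cancel₀ (pow_ne_zero _ hz), one_smul]
    · filter_upwards [self_mem_nhdsWithin] with z hz
      have hz : z ≠ 0 := hz
      rw [smul_eq_mul, pow_succ]; field_simp
  have h8 := h6.trans_tendsto (tendsto_id.mono_left nhdsWithin_le_nhds)
  exact tendsto_nhds_unique tendsto_const_nhds h8

open Asymptotics in
theorem unit_case {A' : Type*} [NormedRing A'] [NormedAlgebra ℂ A'] [CompleteSpace A']
    (P : NCPS B A) (P' : NCPS B A') (a : A) (a' : A') (n : ℕ)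
    (hmom : ∀ k : ℕ, 1 ≤ k → k ≤ n + 1 → ∀ b : Fin k → B,
      momentFn P a k b = momentFn P' a' k b)
    (R R' : B → B) (hR : IsRTransform P a R) (hR' : IsRTransform P' a' R') (b : Bˣ) :
    (fun z : ℂ => R (z • (b : B)) - R' (z • (b : B))) =O[𝓝 0] fun z => z ^ (n + 1) := by
  have hCC : (fun g : B => Ca P a g - Ca P' a' g) =O[𝓝 0] fun g => ‖g‖ ^ (n + 3) := by
    refine ((ca_expand P a (n + 2)).sub (ca_expand P' a' (n + 2))).congr_left fun g => ?_
    have : ∀ k ∈ Finset.range (n + 2), P.E ((P.ι g * a) ^ k) * g = P'.E ((P'.ι g * a') ^ k) * g := by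
      intro k hk
      congr 1
      rcases Nat.eq_zero_or_pos k with rfl | hk0
      · have h1 := P.E_ι 1
        have h2 := P'.E_ι 1
        simp only [map_one] at h1 h2
        simp [h1, h2]
      · have := hmom k hk0 (by have := Finset.mem_range.1 hk; omega) (fun _ => g)
        simpa [momentFn, List.ofFn_const] using this
    rw [Finset.sum_congr rfl this]; abel
  have ht : Tendsto (fun z : ℂ => z • (b : B)) (𝓝 0) (𝓝 0) := by
    have : Continuous (fun z : ℂ => z • (b : B)) := by fun_prop
    simpa using this.tendsto 0
  have hzb : (fun z : ℂ => z • (b : B)) =O[𝓝 0] fun z => z :=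
    IsBigO.of_bound ‖(b : B)‖ (Eventually.of_forall fun z => by simp [norm_smul, mul_comm])
  -- facts about u = 1 + zb R(zb)
  have hu : ∀ S : B → B, AnalyticAt ℂ S 0 →
      Tendsto (fun z : ℂ => 1 + (z • (b : B)) * S (z • (b : B))) (𝓝 0) (𝓝 1) := by
    intro S hS
    have := (ht.mul (hS.continuousAt.tendsto.comp ht)).const_add 1
    simpa using this
  have hunit : ∀ᶠ x in 𝓝 (1 : B), IsUnit x := Units.nhds (1 : Bˣ)
  have hinv : Tendsto (Ring.inverse : B → B) (𝓝 1) (𝓝 1) := by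
    have := NormedRing.inverse_continuousAt (1 : Bˣ)
    simpa [ContinuousAt] using this
  have hG : ∀ S : B → B, AnalyticAt ℂ S 0 →
      (fun z : ℂ => Ring.inverse (1 + (z • (b : B)) * S (z • (b : B))) * (z • (b : B)))
        =O[𝓝 0] fun z => z := by
    intro S hS
    have h1 := (hinv.comp (hu S hS)).isBigO_one ℂ
    exact (h1.mul hzb).congr_right (by simp)
  set u : ℂ → B := fun z => 1 + (z • (b : B)) * R (z • (b : B)) with hudef
  set u' : ℂ → B := fun z => 1 + (z • (b : B)) * R' (z • (b : B)) with hudef'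
  set G : ℂ → B := fun z => Ring.inverse (u z) * (z • (b : B)) with hGdef
  set G' : ℂ → B := fun z => Ring.inverse (u' z) * (z • (b : B)) with hGdef'
  have hGz : G =O[𝓝 0] fun z => z := hG R hR.1
  have hGz' : G' =O[𝓝 0] fun z => z := hG R' hR'.1
  have hGt : Tendsto G (𝓝 0) (𝓝 0) := hGz.trans_tendsto tendsto_id
  have hGt' : Tendsto G' (𝓝 0) (𝓝 0) := hGz'.trans_tendsto tendsto_id
  have e1 : ∀ᶠ z in 𝓝 (0 : ℂ), Ca P a (G z) = z • (b : B) := ht.eventually hR.2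
  have e2 : ∀ᶠ z in 𝓝 (0 : ℂ), Ca P' a' (G' z) = z • (b : B) := ht.eventually hR'.2
  have hstr := (ca_strict P a).isLittleO.comp_tendsto
    (k := fun z => (G z, G' z)) (hGt.prodMk_nhds hGt')
  have hD : (fun z => Ca P a (G z) - Ca P a (G' z)) =O[𝓝 0] fun z => z ^ (n + 3) := by
    have h1 := (hCC.comp_tendsto hGt').trans ((hGz'.norm_left).pow (n + 3))
    refine h1.neg_left.congr' ?_ EventuallyEq.rfl
    filter_upwards [e1, e2] with z h1 h2
    simp [h1, h2]
  have hGG : (fun z => G z - G' z) =O[𝓝 0] fun z => z ^ (n + 3) := by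
    have h1 : (fun z => Ca P a (G z) - Ca P a (G' z) - (G z - G' z)) =o[𝓝 0] fun z => G z - G' z := by
      simpa [Function.comp_def] using hstr
    have h2 := h1.right_isBigO_add
    simp only [sub_add_cancel] at h2
    exact h2.trans hD
  have hubd := (hu R hR.1).isBigO_one ℂ
  have hubd' := (hu R' hR'.1).isBigO_one ℂ
  have hmain : (fun z : ℂ => (b⁻¹ : Bˣ) * (u' z * (G' z - G z) * (b⁻¹ : Bˣ) * u z))
      =O[𝓝 0] fun z => z ^ (n + 3) := by
    have hc := isBigO_const_const ((b⁻¹ : Bˣ) : B) (one_ne_zero (α := ℂ)) (𝓝 (0:ℂ))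
    have h0 : (fun z => G' z - G z) =O[𝓝 0] fun z => z ^ (n + 3) :=
      hGG.neg_left.congr_left (by simp)
    exact (hc.mul (((hubd'.mul h0).mul hc).mul hubd)).congr_right (by simp)
  have e3 : ∀ᶠ z in 𝓝 (0 : ℂ), z ^ 2 • (R (z • (b : B)) - R' (z • (b : B))) =
      (b⁻¹ : Bˣ) * (u' z * (G' z - G z) * (b⁻¹ : Bˣ) * u z) := by
    filter_upwards [(hu R hR.1).eventually hunit, (hu R' hR'.1).eventually hunit] with z h1 h2
    have h1 : IsUnit (u z) := h1
    have h2 : IsUnit (u' z) := h2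
    have k1 : u' z * G' z = z • (b : B) := by
      simp only [hGdef']; rw [← mul_assoc, Ring.mul_inverse_cancel _ h2, one_mul]
    have k2 : G z * (b⁻¹ : Bˣ) * u z = z • (1 : B) := by
      simp only [hGdef]
      rw [mul_assoc _ (z • (b : B)), smul_mul_assoc, Units.mul_inv, mul_smul_comm, mul_one,
        smul_mul_assoc, Ring.inverse_mul_cancel _ h1]
    have k3 : u' z * (G' z - G z) * (b⁻¹ : Bˣ) * u z = z • (u z - u' z) := by
      rw [mul_sub, k1, sub_mul, sub_mul, smul_mul_assoc, Units.mul_inv, smul_mul_assoc, one_mul,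
        mul_assoc, mul_assoc, ← mul_assoc (G z), k2, mul_smul_comm, mul_one, smul_sub]
    rw [k3]
    have k4 : u z - u' z = z • ((b : B) * (R (z • (b : B)) - R' (z • (b : B)))) := by
      simp only [hudef, hudef', add_sub_add_left_eq_sub, smul_mul_assoc, mul_sub, smul_sub]
    rw [k4, smul_smul, mul_smul_comm, Units.inv_mul_cancel_left, sq]
  have h9 : (fun z : ℂ => z ^ 2 • (R (z • (b : B)) - R' (z • (b : B)))) =O[𝓝 0]
      fun z => z ^ (n + 3) := hmain.congr' (e3.mono fun z h => h.symm) EventuallyEq.rfl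
  have h00 : (fun z : ℂ => R (z • (b : B)) - R' (z • (b : B))) =O[𝓝[≠] 0] fun z => z ^ (n + 1) := by
    have h7 := (isBigO_refl (fun z : ℂ => (z ^ 2)⁻¹) (𝓝[≠] 0)).smul (h9.mono nhdsWithin_le_nhds)
    refine h7.congr' ?_ ?_
    · filter_upwards [self_mem_nhdsWithin] with z hz
      rw [smul_smul, inv_mul_cancel₀ (pow_ne_zero _ hz), one_smul]
    · filter_upwards [self_mem_nhdsWithin] with z hz
      have hz : z ≠ 0 := hz
      rw [smul_eq_mul, show n + 3 = n + 1 + 2 by ring, pow_add _ (n + 1) 2]; field_simp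
  -- extend to z = 0 by continuity
  have hcont : Tendsto (fun z : ℂ => R (z • (b : B)) - R' (z • (b : B))) (𝓝 0) (𝓝 (R 0 - R' 0)) :=
    (hR.1.continuousAt.tendsto.comp ht).sub (hR'.1.continuousAt.tendsto.comp ht)
  have hz0 : R 0 - R' 0 = 0 := by
    refine tendsto_nhds_unique (hcont.mono_left nhdsWithin_le_nhds) (h00.trans_tendsto ?_)
    have : Tendsto (fun z : ℂ => z ^ (n + 1)) (𝓝 0) (𝓝 (0 ^ (n + 1))) :=
      (continuous_pow (n + 1)).tendsto 0
    simp only [ne_eq, Nat.succ_ne_zero, not_false_eq_true, zero_pow] at this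
    exact this.mono_left nhdsWithin_le_nhds
  obtain ⟨c, hc⟩ := h00.bound
  refine IsBigO.of_bound c ?_
  rw [eventually_nhdsWithin_iff] at hc
  filter_upwards [hc] with z hz
  by_cases h : z = 0
  · subst h; simp [hz0]
  · exact hz h

theorem stmt_14 {A' : Type*} [NormedRing A'] [NormedAlgebra ℂ A'] [CompleteSpace A']
    (P : NCPS B A) (P' : NCPS B A') (a : A) (a' : A') (n : ℕ)
    (hmom : ∀ k : ℕ, 1 ≤ k → k ≤ n + 1 → ∀ b : Fin k → B,
      momentFn P a k b = momentFn P' a' k b) :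
    ∀ (R R' : B → B) (pR pR' : FormalMultilinearSeries ℂ B B),
      IsRTransform P a R → IsRTransform P' a' R' →
      HasFPowerSeriesAt R pR 0 → HasFPowerSeriesAt R' pR' 0 →
      ∀ b : B, pR n (fun _ => b) = pR' n (fun _ => b) := by
  intro R R' pR pR' hR hR' hp hp' b
  have hu : ∀ b : Bˣ, (pR n - pR' n) (fun _ => (b : B)) = 0 := fun b =>
    term_zero (pR - pR') (R - R') (hp.sub hp') b n
      (unit_case P P' a a' n hmom R R' hR hR' b) n le_rfl
  have han : AnalyticOnNhd ℂ (fun x : B => (pR n - pR' n) (fun _ => x)) Set.univ := by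
    intro x _
    have h1 := (pR n - pR' n).analyticAt (x := fun _ => x)
    have h2 : AnalyticAt ℂ (fun x : B => (fun _ : Fin n => x)) x :=
      AnalyticAt.pi (fun _ => analyticAt_id)
    exact h1.fun_comp h2
  have hz := han.eqOn_zero_of_preconnected_of_eventuallyEq_zero isPreconnected_univ
    (Set.mem_univ (1 : B)) (by
      filter_upwards [Units.nhds (1 : Bˣ)] with x hx
      obtain ⟨v, rfl⟩ := hx
      exact hu v)
  have := hz (Set.mem_univ b)
  exact sub_eq_zero.1 (by simpa using this)
end
end
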